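/- Under the MS-LS model with α_i + α_j = α for all pairs i, j, the fully explicit conditional variance of the nodal strength given the previous state l is Var(Y_t | s_{t-1} = l) = Σ_{k=1}^K q_{lk} V_k + Σ_{k=1}^K q_{lk} (μ_k − μ_l*)², where μ_k = (N−1) e^α (4σ_k²β + 1)^{−d/2}, μ_l* = Σ_{k=1}^K q_{lk} μ_k, and V_k = e^{2α}(N−1)(8σ_k²β + 1)^{−d/2} + (N−1)(N−2) e^{2α} (2σ_k²β + 1)^{−d/2}(6σ_k²β + 1)^{−d/2} + (N−1) e^α (4σ_k²β + 1)^{−d/2} − (N−1)² e^{2α} (4σ_k²β + 1)^{−d}. -/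

import Mathlib

open MeasureTheory ProbabilityTheory Real

noncomputable section

/-- Density of the centered isotropic Gaussian `N(0, σ² I_d)` on `ℝ^d`. -/
def gaussPdf (d : ℕ) (σ2 : ℝ) (x : EuclideanSpace ℝ (Fin d)) : ℝ :=
  (2 * Real.pi * σ2) ^ (-(d : ℝ) / 2) * Real.exp (-‖x‖ ^ 2 / (2 * σ2))

/-- The centered isotropic Gaussian measure `N(0, σ² I_d)` on `ℝ^d`. -/
def gaussMeasure (d : ℕ) (σ2 : ℝ) : Measure (EuclideanSpace ℝ (Fin d)) :=
  volume.withDensity fun x => ENNReal.ofReal (gaussPdf d σ2 x)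

/-- Unordered pairs of distinct nodes, represented as ordered pairs `(i, j)` with `i < j`. -/
abbrev Pairs (N : ℕ) : Type := {p : Fin N × Fin N // p.1 < p.2}

/-- Joint law of the latent positions `(Z_i)_{i}` (i.i.d. `N(0, σ² I_d)`) and of the
edge weights `(Y_{ij})_{i<j}`, which given the latent positions are conditionally independent
Poisson variables with intensity `exp (α_i + α_j - β ‖Z_i - Z_j‖²)`. -/
def jointLaw (d N : ℕ) (β : ℝ) (α : Fin N → ℝ) (σ2 : ℝ) :
    Measure ((Fin N → EuclideanSpace ℝ (Fin d)) × (Pairs N → ℕ)) :=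
  (volume.withDensity fun z : Fin N → EuclideanSpace ℝ (Fin d) =>
      ENNReal.ofReal (∏ i, gaussPdf d σ2 (z i))).bind fun z =>
    (Measure.pi fun p : Pairs N =>
        poissonMeasure
          (Real.exp (α p.1.1 + α p.1.2 - β * ‖z p.1.1 - z p.1.2‖ ^ 2)).toNNReal).map
      fun y => (z, y)

/-- The Markov-switching latent space (MS-LS) network model: a hidden `K`-state Markov chain
`s`, state-dependent i.i.d. Gaussian latent positions `Z`, and symmetric edge weights `Y`
that conditionally on the current state (and given the latent positions) are independent
Poisson variables with log-intensity `α i + α j - β ‖Z i k - Z j k‖²`. -/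
structure MSLS (Ω : Type) [MeasurableSpace Ω] where
  /-- the underlying probability measure -/
  P : Measure Ω
  isProb : IsProbabilityMeasure P
  /-- the dimension of the latent space -/
  d : ℕ
  /-- the number of nodes -/
  N : ℕ
  /-- the number of states of the hidden Markov chain -/
  K : ℕ
  β : ℝ
  β_pos : 0 < β
  /-- individual effects -/
  α : Fin N → ℝ
  /-- state-specific variances of the latent positions -/
  σ2 : Fin K → ℝ
  σ2_pos : ∀ k, 0 < σ2 k
  /-- transition probabilities of the hidden Markov chain -/
  q : Fin K → Fin K → ℝ
  q_nonneg : ∀ l k, 0 ≤ q l k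
  q_sum : ∀ l, ∑ k, q l k = 1
  /-- the hidden Markov chain -/
  s : ℕ → Ω → Fin K
  s_meas : ∀ t, Measurable (s t)
  /-- the latent positions in each state -/
  Z : Fin N → Fin K → Ω → EuclideanSpace ℝ (Fin d)
  Z_meas : ∀ i k, Measurable (Z i k)
  /-- the edge weights -/
  Y : Fin N → Fin N → ℕ → Ω → ℕ
  Y_meas : ∀ i j t, Measurable (Y i j t)
  Y_symm : ∀ i j t ω, Y i j t ω = Y j i t ω
  state_pos : ∀ t k, P {ω | s t ω = k} ≠ 0
  /-- Markov transition probabilities -/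
  trans_prob : ∀ t l k, ((P[|{ω | s t ω = l}]) {ω | s (t + 1) ω = k}).toReal = q l k
  /-- conditionally on the current state, the latent positions and the edge weights follow
  the Poisson latent space law -/
  cond_law_state : ∀ t k,
    (P[|{ω | s t ω = k}]).map
        (fun ω => ((fun i => Z i k ω), fun p : Pairs N => Y p.1.1 p.1.2 t ω)) =
      jointLaw d N β α (σ2 k)
  /-- conditionally on the previous and current state, the latent positions and the edge
  weights follow the Poisson latent space law of the current state -/
  cond_law_pair : ∀ t l k, q l k ≠ 0 →
    (P[|{ω | s t ω = l} ∩ {ω | s (t + 1) ω = k}]).map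
        (fun ω => ((fun i => Z i k ω), fun p : Pairs N => Y p.1.1 p.1.2 (t + 1) ω)) =
      jointLaw d N β α (σ2 k)

attribute [instance] MSLS.isProb

/-- The nodal strength `Y_{it} = Σ_{j ≠ i} Y_{ijt}` of node `i` at time `t`. -/
def MSLS.strength {Ω : Type} [MeasurableSpace Ω] (M : MSLS Ω) (i : Fin M.N) (t : ℕ)
    (ω : Ω) : ℕ :=
  ∑ j ∈ Finset.univ.erase i, M.Y i j t ω

end

/-!
Given the latent positions `z`, the strength of node `i` is a sum of independent Poisson variables,
hence Poisson with mean `Λ_i(z) = ∑_{j ≠ i} exp (α_i + α_j - β ‖z_i - z_j‖²)`. In state `k` the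
strength therefore has a mixed Poisson law, with first two moments `E[Λ_i]` and `E[Λ_i²] + E[Λ_i]`,
and given `s_t = l` its law is the mixture of these laws with weights `q_{lk}`. The law of total
variance for a finite mixture is the claimed formula, with `μ_k` and `V_k` the mean and the variance
of the strength law in state `k`.

For the moments of `Λ_i`, condition on `z_i`: the summands become i.i.d., so expanding the square
leaves `∬ f²` and `∫ (∫ f)²` for the kernel `f(x, w) = exp (-β ‖x - w‖²)`. Completing the square
shows that integrating `f` against `N(0, s I_d)` in `w` gives
`(1 + 2βs)^(-d/2) exp (-β ‖x‖² / (1 + 2βs))`, again a Gaussian function. This produces the factor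
`4sβ + 1` in the mean; in the second moment, `8sβ + 1` comes from `f²` (double `β`) and
`(2sβ + 1)(6sβ + 1)` from two edges sharing the node `i`.
-/

open scoped ENNReal NNReal

section Poisson

theorem measurable_poissonMeasure : Measurable poissonMeasure := by
  refine Measure.measurable_of_measurable_coe _ fun S hS => ?_
  simp only [poissonMeasure, Measure.sum_apply _ hS, Measure.smul_apply, smul_eq_mul]
  fun_prop

theorem poissonMeasure_zero : poissonMeasure 0 = Measure.dirac 0 := by
  refine Measure.ext_of_singleton fun n => ?_
  obtain - | n := n <;> simp [poissonMeasure_singleton]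

theorem lintegral_natCast_mul_poissonMeasure (r : ℝ≥0) (g : ℕ → ℝ≥0∞) :
    ∫⁻ n, n * g n ∂poissonMeasure r = r * ∫⁻ n, g (n + 1) ∂poissonMeasure r := by
  have shift (n : ℕ) : ENNReal.ofReal (exp (-r) * r ^ (n + 1) / (n + 1).factorial) * (n + 1 : ℕ) =
      r * ENNReal.ofReal (exp (-r) * r ^ n / n.factorial) := by
    rw [← ENNReal.ofReal_natCast, ← ENNReal.ofReal_coe_nnreal,
      ← ENNReal.ofReal_mul (by positivity), ← ENNReal.ofReal_mul (by positivity),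
      Nat.factorial_succ]
    congr 1
    push_cast
    field_simp
    ring
  simp only [poissonMeasure, lintegral_sum_measure, lintegral_smul_measure, lintegral_dirac,
    smul_eq_mul]
  rw [tsum_eq_zero_add' ENNReal.summable, ← ENNReal.tsum_mul_left]
  simp only [Nat.cast_zero, zero_mul, mul_zero, zero_add, ← mul_assoc, shift]

theorem lintegral_natCast_poissonMeasure (r : ℝ≥0) : ∫⁻ n, n ∂poissonMeasure r = r := by
  simpa using lintegral_natCast_mul_poissonMeasure r 1

theorem lintegral_natCast_sq_poissonMeasure (r : ℝ≥0) :
    ∫⁻ n, (n : ℝ≥0∞) ^ 2 ∂poissonMeasure r = r ^ 2 + r := by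
  simp only [sq, lintegral_natCast_mul_poissonMeasure r fun n => n, Nat.cast_add, Nat.cast_one]
  rw [lintegral_add_right _ measurable_const, lintegral_natCast_poissonMeasure]
  simp [mul_add]

theorem hasLaw_sum_poissonMeasure {Ω ι : Type*} {mΩ : MeasurableSpace Ω} {P : Measure Ω}
    {X : ι → Ω → ℕ} {r : ι → ℝ≥0} (hX : ∀ i, Measurable (X i))
    (hlaw : ∀ i, HasLaw (X i) (poissonMeasure (r i)) P) (hind : iIndepFun X P) (t : Finset ι) :
    HasLaw (∑ i ∈ t, X i) (poissonMeasure (∑ i ∈ t, r i)) P := by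
  classical
  have := hind.isProbabilityMeasure
  induction t using Finset.induction_on with
  | empty =>
    rw [Finset.sum_empty, Finset.sum_empty, poissonMeasure_zero]
    exact hasLaw_dirac_of_ae_eq .rfl
  | insert i t hi ih =>
    rw [Finset.sum_insert hi, Finset.sum_insert hi]
    exact (hind.indepFun_finsetSum_of_notMem hX hi).symm.hasLaw_add_poissonMeasure (hlaw i) ih

theorem map_sum_pi_poissonMeasure {κ ι : Type*} [Fintype κ] [Fintype ι] (r : κ → ℝ≥0)
    {e : ι → κ} (he : e.Injective) :
    (Measure.pi fun k => poissonMeasure (r k)).map (fun y => ∑ i, y (e i)) =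
      poissonMeasure (∑ i, r (e i)) := by
  have hind : iIndepFun (fun (k : κ) (y : κ → ℕ) => y k)
      (Measure.pi fun k => poissonMeasure (r k)) := iIndepFun_pi fun _ => aemeasurable_id
  have hlaw := hasLaw_sum_poissonMeasure (fun i => measurable_pi_apply (e i))
    (fun i => (measurePreserving_eval (fun k => poissonMeasure (r k)) (e i)).hasLaw)
    (hind.precomp he) Finset.univ
  rw [← hlaw.map_eq]
  congr 1
  ext y
  simp

end Poisson

section PoissonMixture

variable {X : Type*} [MeasurableSpace X] {ν : Measure X} {r : X → ℝ≥0}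

theorem lintegral_natCast_bind_poissonMeasure (hr : Measurable r) :
    ∫⁻ n, n ∂(ν.bind fun x => poissonMeasure (r x)) = ∫⁻ x, r x ∂ν := by
  have hκ : Measurable fun x => poissonMeasure (r x) := measurable_poissonMeasure.comp hr
  rw [Measure.lintegral_bind hκ.aemeasurable (by fun_prop)]
  simp only [lintegral_natCast_poissonMeasure]

theorem lintegral_natCast_sq_bind_poissonMeasure (hr : Measurable r) :
    ∫⁻ n, (n : ℝ≥0∞) ^ 2 ∂(ν.bind fun x => poissonMeasure (r x)) =
      ∫⁻ x, (r x : ℝ≥0∞) ^ 2 ∂ν + ∫⁻ x, r x ∂ν := by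
  have hκ : Measurable fun x => poissonMeasure (r x) := measurable_poissonMeasure.comp hr
  rw [Measure.lintegral_bind hκ.aemeasurable (by fun_prop)]
  simp only [lintegral_natCast_sq_poissonMeasure]
  exact lintegral_add_left (by fun_prop) _

end PoissonMixture

section ProductMeasure

theorem measurable_measure_pi {X ι : Type*} [MeasurableSpace X] [Fintype ι] {E : ι → Type*}
    [∀ i, MeasurableSpace (E i)] {κ : ∀ i, X → Measure (E i)}
    [∀ i x, IsProbabilityMeasure (κ i x)] (hκ : ∀ i, Measurable (κ i)) :
    Measurable fun x => Measure.pi fun i => κ i x := by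
  refine Measurable.measure_of_isPiSystem_of_isProbabilityMeasure generateFrom_pi.symm
    isPiSystem_pi ?_
  rintro _ ⟨S, hS, rfl⟩
  simp only [Measure.pi_pi]
  exact Finset.measurable_fun_prod _ fun i _ =>
    (Measure.measurable_coe (hS i (Set.mem_univ i))).comp (hκ i)

theorem measurable_map_prodMk {X Y : Type*} [MeasurableSpace X] [MeasurableSpace Y]
    {κ : X → Measure Y} [∀ x, IsProbabilityMeasure (κ x)] (hκ : Measurable κ) :
    Measurable fun x => (κ x).map (Prod.mk x) := by
  let η : Kernel X Y := ⟨κ, hκ⟩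
  have : IsMarkovKernel η := ⟨fun x => inferInstanceAs (IsProbabilityMeasure (κ x))⟩
  convert (Kernel.id ×ₖ η).measurable with x
  rw [Kernel.prod_apply, Kernel.id_apply, Measure.dirac_prod]
  rfl

theorem measure_map_bind {X Y W : Type*} [MeasurableSpace X] [MeasurableSpace Y] [MeasurableSpace W]
    {ν : Measure X} {κ : X → Measure Y} (hκ : Measurable κ) {g : Y → W} (hg : Measurable g) :
    (ν.bind κ).map g = ν.bind fun x => (κ x).map g :=
  Measure.map_comp ν ⟨κ, hκ⟩ hg |>.trans <| by
    congr 1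
    ext x : 1
    exact Kernel.map_apply _ hg x

theorem pi_withDensity_ofReal {ι : Type*} [Fintype ι] {E : ι → Type*} [∀ i, MeasurableSpace (E i)]
    {μ : ∀ i, Measure (E i)} [∀ i, SigmaFinite (μ i)] {f : ∀ i, E i → ℝ} (hf₀ : ∀ i x, 0 ≤ f i x)
    (hf : ∀ i, Integrable (f i) (μ i)) :
    Measure.pi (fun i => (μ i).withDensity fun x => ENNReal.ofReal (f i x)) =
      (Measure.pi μ).withDensity fun x => ENNReal.ofReal (∏ i, f i (x i)) := by
  have (i : ι) : IsFiniteMeasure ((μ i).withDensity fun x => ENNReal.ofReal (f i x)) :=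
    isFiniteMeasure_withDensity_ofReal (hf i).2
  refine Measure.pi_eq fun S hS => ?_
  rw [withDensity_apply _ (.univ_pi hS), Measure.restrict_pi_pi,
    ← ofReal_integral_eq_lintegral_ofReal (.fintype_prod_dep fun i => (hf i).restrict)
      (ae_of_all _ fun x => Finset.prod_nonneg fun i _ => hf₀ i (x i)),
    integral_fintype_prod_eq_prod f,
    ENNReal.ofReal_prod_of_nonneg fun i _ => integral_nonneg (hf₀ i)]
  refine Finset.prod_congr rfl fun i _ => ?_
  rw [ofReal_integral_eq_lintegral_ofReal (hf i).restrict (ae_of_all _ (hf₀ i)),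
    withDensity_apply _ (hS i)]

variable {E ι : Type*} [MeasurableSpace E] [Fintype ι] {γ : Measure E} [IsProbabilityMeasure γ]

theorem lintegral_sum_pi {g : E → ℝ≥0∞} (hg : Measurable g) :
    ∫⁻ w, ∑ j, g (w j) ∂(Measure.pi fun _ : ι => γ) = Fintype.card ι * ∫⁻ x, g x ∂γ := by
  rw [lintegral_finsetSum _ fun j _ => by fun_prop]
  simp [fun j => (measurePreserving_eval (fun _ : ι => γ) j).lintegral_comp hg]

theorem lintegral_sum_sq_pi {g : E → ℝ≥0∞} (hg : Measurable g) :
    ∫⁻ w, (∑ j, g (w j)) ^ 2 ∂(Measure.pi fun _ : ι => γ) =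
      Fintype.card ι * ∫⁻ x, g x ^ 2 ∂γ +
        (Fintype.card ι).descFactorial 2 * (∫⁻ x, g x ∂γ) ^ 2 := by
  classical
  have hind : iIndepFun (fun (j : ι) (w : ι → E) => g (w j)) (Measure.pi fun _ => γ) :=
    iIndepFun_pi fun _ => hg.aemeasurable
  have heval {h : E → ℝ≥0∞} (hh : Measurable h) (j : ι) :
      ∫⁻ w, h (w j) ∂(Measure.pi fun _ : ι => γ) = ∫⁻ x, h x ∂γ :=
    (measurePreserving_eval (fun _ : ι => γ) j).lintegral_comp hh
  have hdiag (j : ι) : ∫⁻ w, g (w j) * g (w j) ∂(Measure.pi fun _ : ι => γ) = ∫⁻ x, g x ^ 2 ∂γ := by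
    simp only [← sq, heval (hg.pow_const 2)]
  have hoff {p : ι × ι} (hp : p ∈ Finset.univ.offDiag) :
      ∫⁻ w, g (w p.1) * g (w p.2) ∂(Measure.pi fun _ : ι => γ) = (∫⁻ x, g x ∂γ) ^ 2 :=
    (lintegral_mul_eq_lintegral_mul_lintegral_of_indepFun (by fun_prop) (by fun_prop)
      (hind.indepFun (Finset.mem_offDiag.1 hp).2.2)).trans (by rw [heval hg, heval hg, sq])
  have hcard : (Finset.univ : Finset ι).offDiag.card = (Fintype.card ι).descFactorial 2 := by
    simp [Finset.offDiag_card, Nat.descFactorial, mul_comm, Nat.mul_sub_one]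
  simp only [sq (∑ _, g _), Finset.sum_mul_sum, ← Finset.sum_product',
    ← Finset.diag_union_offDiag, Finset.sum_union (Finset.disjoint_diag_offDiag _),
    Finset.sum_diag]
  rw [lintegral_add_left (by fun_prop), lintegral_finsetSum _ fun j _ => by fun_prop,
    lintegral_finsetSum _ fun p _ => by fun_prop, Finset.sum_congr rfl fun _ => hoff]
  simp only [hdiag, Finset.sum_const, nsmul_eq_mul, hcard, Finset.card_univ]

theorem lintegral_pi_eq_lintegral_lintegral_pi_ne [DecidableEq ι] (i : ι)
    {f : E → ({j // j ≠ i} → E) → ℝ≥0∞} (hf : Measurable f.uncurry) :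
    ∫⁻ z, f (z i) (fun j => z j) ∂(Measure.pi fun _ : ι => γ) =
      ∫⁻ x, ∫⁻ w, f x w ∂(Measure.pi fun _ => γ) ∂γ := by
  have hsplit := measurePreserving_piEquivPiSubtypeProd (fun _ : ι => γ) (· = i)
  -- the instance `measurePreserving_piEquivPiSubtypeProd` uses, which is not the default one here
  let _ : Fintype {j // j = i} := Subtype.fintype (· = i)
  have heval := measurePreserving_eval (fun _ : {j // j = i} => γ) ⟨i, rfl⟩
  refine Eq.trans ?_ (lintegral_prod (Function.uncurry f) hf.aemeasurable)
  exact ((heval.prod (.id _)).comp hsplit).lintegral_comp hf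

theorem lintegral_sum_star [DecidableEq ι] (i : ι) {f : E → E → ℝ≥0∞}
    (hf : Measurable f.uncurry) :
    ∫⁻ z, ∑ j : {j // j ≠ i}, f (z i) (z j) ∂(Measure.pi fun _ : ι => γ) =
      (Fintype.card ι - 1 : ℕ) * ∫⁻ x, ∫⁻ w, f x w ∂γ ∂γ := by
  rw [lintegral_pi_eq_lintegral_lintegral_pi_ne i (f := fun x w => ∑ j, f x (w j)) (by fun_prop)]
  simp only [lintegral_sum_pi hf.of_uncurry_left, Fintype.card_subtype_compl,
    Fintype.card_subtype_eq]
  exact lintegral_const_mul _ hf.lintegral_prod_right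

theorem lintegral_sum_sq_star [DecidableEq ι] (i : ι) {f : E → E → ℝ≥0∞}
    (hf : Measurable f.uncurry) :
    ∫⁻ z, (∑ j : {j // j ≠ i}, f (z i) (z j)) ^ 2 ∂(Measure.pi fun _ : ι => γ) =
      (Fintype.card ι - 1 : ℕ) * ∫⁻ x, ∫⁻ w, f x w ^ 2 ∂γ ∂γ +
        (Fintype.card ι - 1).descFactorial 2 * ∫⁻ x, (∫⁻ w, f x w ∂γ) ^ 2 ∂γ := by
  have hf₁ : Measurable fun x => ∫⁻ w, f x w ∂γ := hf.lintegral_prod_right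
  have hf₂ : Measurable fun x => ∫⁻ w, f x w ^ 2 ∂γ := (hf.pow_const 2).lintegral_prod_right
  rw [lintegral_pi_eq_lintegral_lintegral_pi_ne i (f := fun x w => (∑ j, f x (w j)) ^ 2)
    (by fun_prop)]
  simp only [lintegral_sum_sq_pi hf.of_uncurry_left, Fintype.card_subtype_compl,
    Fintype.card_subtype_eq]
  rw [lintegral_add_left (by fun_prop), lintegral_const_mul _ hf₂,
    lintegral_const_mul _ (hf₁.pow_const 2)]

end ProductMeasure

section Gaussian

theorem mul_sq_norm_sub_add_mul_sq_norm {V : Type*} [NormedAddCommGroup V] [InnerProductSpace ℝ V]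
    {c e : ℝ} (h : c + e ≠ 0) (x w : V) :
    c * ‖x - w‖ ^ 2 + e * ‖w‖ ^ 2 =
      (c + e) * ‖w - (c / (c + e)) • x‖ ^ 2 + c * e / (c + e) * ‖x‖ ^ 2 := by
  rw [norm_sub_sq_real, norm_sub_sq_real, inner_smul_right, norm_smul, real_inner_comm,
    Real.norm_eq_abs, mul_pow, sq_abs]
  field_simp
  ring

theorem lintegral_exp_neg_mul_sq_norm {V : Type*} [NormedAddCommGroup V] [InnerProductSpace ℝ V]
    [FiniteDimensional ℝ V] [MeasurableSpace V] [BorelSpace V] {b : ℝ} (hb : 0 < b) :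
    ∫⁻ v : V, ENNReal.ofReal (exp (-b * ‖v‖ ^ 2)) =
      ENNReal.ofReal ((π / b) ^ (Module.finrank ℝ V / 2 : ℝ)) := by
  have h := GaussianFourier.integral_rexp_neg_mul_sq_norm (V := V) hb
  have hint : Integrable fun v : V => exp (-b * ‖v‖ ^ 2) :=
    .of_integral_ne_zero (by rw [h]; positivity)
  rw [← ofReal_integral_eq_lintegral_ofReal hint (ae_of_all _ fun _ => (exp_pos _).le), h]

variable {d : ℕ} {s c : ℝ}

theorem measurable_gaussPdf : Measurable (gaussPdf d s) := by
  unfold gaussPdf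
  fun_prop

theorem gaussPdf_nonneg (hs : 0 ≤ s) (x : EuclideanSpace ℝ (Fin d)) : 0 ≤ gaussPdf d s x := by
  unfold gaussPdf
  positivity

theorem gaussPdf_mul_exp_neg_mul_sq_norm_sub (hs : 0 < s) (hc : 0 ≤ c)
    (x w : EuclideanSpace ℝ (Fin d)) :
    gaussPdf d s w * exp (-c * ‖x - w‖ ^ 2) =
      (2 * π * s) ^ (-(d : ℝ) / 2) * exp (-(c / (1 + 2 * c * s)) * ‖x‖ ^ 2) *
        exp (-(c + 1 / (2 * s)) * ‖w - (c / (c + 1 / (2 * s))) • x‖ ^ 2) := by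
  have hsq := mul_sq_norm_sub_add_mul_sq_norm (by positivity : c + 1 / (2 * s) ≠ 0) x w
  have hcoef : c * (1 / (2 * s)) / (c + 1 / (2 * s)) = c / (1 + 2 * c * s) := by
    field_simp
    ring
  rw [hcoef] at hsq
  rw [gaussPdf, mul_assoc _ (exp _), mul_assoc _ (exp _), ← exp_add, ← exp_add]
  congr 2
  linear_combination -hsq

theorem lintegral_exp_neg_mul_sq_norm_sub_gaussMeasure (hs : 0 < s) (hc : 0 ≤ c)
    (x : EuclideanSpace ℝ (Fin d)) :
    ∫⁻ w, ENNReal.ofReal (exp (-c * ‖x - w‖ ^ 2)) ∂(gaussMeasure d s) =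
      ENNReal.ofReal ((1 + 2 * c * s) ^ (-(d : ℝ) / 2) *
        exp (-(c / (1 + 2 * c * s)) * ‖x‖ ^ 2)) := by
  have hnorm : (2 * π * s) ^ (-(d : ℝ) / 2) * (π / (c + 1 / (2 * s))) ^ (d / 2 : ℝ) =
      (1 + 2 * c * s) ^ (-(d : ℝ) / 2) := by
    have h : π / (c + 1 / (2 * s)) = 2 * π * s / (1 + 2 * c * s) := by
      field_simp
      ring
    rw [h, div_rpow (by positivity) (by positivity), neg_div, rpow_neg (by positivity),
      rpow_neg (by positivity)]
    field_simp
  rw [gaussMeasure, lintegral_withDensity_eq_lintegral_mul _ measurable_gaussPdf.ennreal_ofReal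
    (by fun_prop)]
  simp only [Pi.mul_apply, ← ENNReal.ofReal_mul (gaussPdf_nonneg hs.le _),
    gaussPdf_mul_exp_neg_mul_sq_norm_sub hs hc]
  simp only [ENNReal.ofReal_mul (show
    0 ≤ (2 * π * s) ^ (-(d : ℝ) / 2) * exp (-(c / (1 + 2 * c * s)) * ‖x‖ ^ 2) by positivity)]
  rw [lintegral_const_mul _ (by fun_prop), lintegral_sub_right_eq_self
      fun v : EuclideanSpace ℝ (Fin d) => ENNReal.ofReal (exp (-(c + 1 / (2 * s)) * ‖v‖ ^ 2)),
    lintegral_exp_neg_mul_sq_norm (by positivity), finrank_euclideanSpace_fin,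
    ← ENNReal.ofReal_mul (by positivity), mul_right_comm, hnorm]

theorem isProbabilityMeasure_gaussMeasure (hs : 0 < s) : IsProbabilityMeasure (gaussMeasure d s) :=
  ⟨by simpa using lintegral_exp_neg_mul_sq_norm_sub_gaussMeasure (d := d) hs le_rfl 0⟩

theorem integrable_gaussPdf (hs : 0 < s) : Integrable (gaussPdf d s) := by
  have := isProbabilityMeasure_gaussMeasure (d := d) hs
  refine ⟨measurable_gaussPdf.aestronglyMeasurable, ?_⟩
  rw [hasFiniteIntegral_iff_ofReal (ae_of_all _ (gaussPdf_nonneg hs.le)), ← setLIntegral_univ,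
    ← withDensity_apply _ .univ]
  exact measure_lt_top (gaussMeasure d s) _

theorem withDensity_prod_gaussPdf {ι : Type*} [Fintype ι] (hs : 0 < s) :
    (volume.withDensity fun z : ι → EuclideanSpace ℝ (Fin d) =>
      ENNReal.ofReal (∏ i, gaussPdf d s (z i))) = Measure.pi fun _ => gaussMeasure d s :=
  (pi_withDensity_ofReal (fun _ => gaussPdf_nonneg hs.le) fun _ => integrable_gaussPdf hs).symm

theorem lintegral_lintegral_pow_exp_neg_mul_sq_norm_sub_gaussMeasure (hs : 0 < s) (hc : 0 ≤ c)
    (m : ℕ) :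
    ∫⁻ x, (∫⁻ w, ENNReal.ofReal (exp (-c * ‖x - w‖ ^ 2)) ∂(gaussMeasure d s)) ^ (m + 1)
        ∂(gaussMeasure d s) =
      ENNReal.ofReal (((1 + 2 * c * s) ^ m * (1 + 2 * (m + 2) * c * s)) ^ (-(d : ℝ) / 2)) := by
  have hpow (x : EuclideanSpace ℝ (Fin d)) :
      ((1 + 2 * c * s) ^ (-(d : ℝ) / 2) * exp (-(c / (1 + 2 * c * s)) * ‖x‖ ^ 2)) ^ (m + 1) =
        ((1 + 2 * c * s) ^ (m + 1)) ^ (-(d : ℝ) / 2) *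
          exp (-((m + 1) * (c / (1 + 2 * c * s))) * ‖0 - x‖ ^ 2) := by
    rw [mul_pow, ← exp_nat_mul, rpow_pow_comm (by positivity), zero_sub, norm_neg]
    push_cast
    ring_nf
  simp only [lintegral_exp_neg_mul_sq_norm_sub_gaussMeasure hs hc,
    ← ENNReal.ofReal_pow (show 0 ≤ (1 + 2 * c * s) ^ (-(d : ℝ) / 2) *
      exp (-(c / (1 + 2 * c * s)) * ‖_‖ ^ 2) by positivity), hpow,
    ENNReal.ofReal_mul (show 0 ≤ ((1 + 2 * c * s) ^ (m + 1)) ^ (-(d : ℝ) / 2) by positivity)]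
  rw [lintegral_const_mul _ (by fun_prop),
    lintegral_exp_neg_mul_sq_norm_sub_gaussMeasure hs (by positivity), norm_zero,
    zero_pow two_ne_zero, mul_zero, exp_zero, mul_one, ← ENNReal.ofReal_mul (by positivity),
    ← mul_rpow (by positivity) (by positivity)]
  congr 2
  field_simp
  ring

end Gaussian

section Variance

variable {Ω : Type*} [MeasurableSpace Ω] {X : Ω → ℝ}

theorem integral_sub_const_sq {ν : Measure Ω} [IsProbabilityMeasure ν] (hX : MemLp X 2 ν) (c : ℝ) :
    ∫ ω, (X ω - c) ^ 2 ∂ν = Var[X; ν] + (ν[X] - c) ^ 2 := by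
  have h := variance_eq_sub (hX.sub (memLp_const c))
  simp only [Pi.sub_apply, Pi.pow_apply] at h
  rw [show X - (fun _ => c) = fun ω => X ω - c from rfl,
    variance_sub_const hX.aestronglyMeasurable, integral_sub (hX.integrable one_le_two)
    (integrable_const c), integral_const, probReal_univ, one_smul] at h
  linarith

theorem variance_eq_toReal_lintegral_sub_sq {ν : Measure Ω} [IsProbabilityMeasure ν]
    (hX : MemLp X 2 ν) (hX₀ : 0 ≤ X) :
    Var[X; ν] = (∫⁻ ω, ENNReal.ofReal (X ω) ^ 2 ∂ν).toReal -
      (∫⁻ ω, ENNReal.ofReal (X ω) ∂ν).toReal ^ 2 := by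
  have hsq : (0 : Ω → ℝ) ≤ X ^ 2 := fun ω => sq_nonneg (X ω)
  rw [variance_eq_sub hX, integral_eq_lintegral_of_nonneg_ae (ae_of_all _ hX₀) hX.1,
    integral_eq_lintegral_of_nonneg_ae (ae_of_all _ hsq) (hX.1.pow 2)]
  simp only [Pi.pow_apply, ENNReal.ofReal_pow (hX₀ _)]

variable {κ : Type*} [Fintype κ] {w : κ → ℝ} {ν : κ → Measure Ω}

theorem integral_sum_ofReal_smul_measure (hw : ∀ k, 0 ≤ w k) (hX : ∀ k, Integrable X (ν k)) :
    ∫ ω, X ω ∂(∑ k, ENNReal.ofReal (w k) • ν k) = ∑ k, w k * ∫ ω, X ω ∂ν k := by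
  rw [integral_finsetSum_measure fun k _ => (hX k).smul_measure ENNReal.ofReal_ne_top]
  simp only [integral_smul_measure, ENNReal.toReal_ofReal (hw _), smul_eq_mul]

theorem variance_sum_ofReal_smul_measure [∀ k, IsProbabilityMeasure (ν k)] (hw : ∀ k, 0 ≤ w k)
    (hX : ∀ k, MemLp X 2 (ν k)) :
    Var[X; ∑ k, ENNReal.ofReal (w k) • ν k] =
      ∑ k, w k * Var[X; ν k] + ∑ k, w k * ((ν k)[X] - ∑ j, w j * (ν j)[X]) ^ 2 := by
  have hmeas : AEMeasurable X (∑ k, ENNReal.ofReal (w k) • ν k) := by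
    rw [← Measure.sum_fintype, aemeasurable_sum_measure_iff]
    exact fun k => (hX k).aemeasurable.smul_measure _
  rw [variance_eq_integral hmeas,
    integral_sum_ofReal_smul_measure hw fun k => (hX k).integrable one_le_two,
    integral_sum_ofReal_smul_measure (X := fun ω => (X ω - _) ^ 2) hw fun k =>
      ((hX k).sub (memLp_const _)).integrable_sq]
  simp only [integral_sub_const_sq (hX _), mul_add, Finset.sum_add_distrib]

end Variance

noncomputable section Network

variable {N d : ℕ} {i : Fin N}

/-- The unordered pair `{i, j}` for a node `j` other than `i`, with the smaller node first. -/
def incidentPair (i : Fin N) (j : {j // j ≠ i}) : Pairs N :=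
  ⟨(min i j, max i j), min_lt_max.2 j.2.symm⟩

theorem incidentPair_injective : (incidentPair i).Injective := by
  rintro ⟨j, hj⟩ ⟨j', hj'⟩ h
  simp only [incidentPair, Subtype.mk.injEq, Prod.mk.injEq] at h ⊢
  grind

theorem MSLS.strength_eq_sum_incidentPair {Ω : Type} [MeasurableSpace Ω] (M : MSLS Ω)
    (i : Fin M.N) (t : ℕ) (ω : Ω) :
    M.strength i t ω =
      ∑ j, M.Y (incidentPair i j).1.1 (incidentPair i j).1.2 t ω := by
  rw [strength, Finset.sum_subtype (p := (· ≠ i)) _ (by simp)]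
  refine Finset.sum_congr rfl fun j _ => ?_
  obtain h | h := le_total i j
  · simp [incidentPair, h]
  · simp [incidentPair, h, M.Y_symm i]

/-- The conditional mean of the edge weight between `i` and `j` given the latent positions `z`. -/
def edgeIntensity (β : ℝ) (α : Fin N → ℝ) (z : Fin N → EuclideanSpace ℝ (Fin d)) (i j : Fin N) :
    ℝ≥0 :=
  (exp (α i + α j - β * ‖z i - z j‖ ^ 2)).toNNReal

/-- The conditional mean of the strength of `i` given the latent positions `z`. -/
def strengthIntensity (β : ℝ) (α : Fin N → ℝ) (i : Fin N) (z : Fin N → EuclideanSpace ℝ (Fin d)) :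
    ℝ≥0 :=
  ∑ j : {j // j ≠ i}, edgeIntensity β α z i j

/-- The law of the strength of `i` when the latent positions are i.i.d. `N(0, s I_d)`: a mixture
of Poisson laws. -/
def strengthLaw (d : ℕ) (β : ℝ) (α : Fin N → ℝ) (s : ℝ) (i : Fin N) : Measure ℕ :=
  (Measure.pi fun _ => gaussMeasure d s).bind fun z => poissonMeasure (strengthIntensity β α i z)

variable {β s : ℝ} {α : Fin N → ℝ}

@[fun_prop]
theorem measurable_edgeIntensity (j : Fin N) :
    Measurable fun z : Fin N → EuclideanSpace ℝ (Fin d) => edgeIntensity β α z i j := by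
  unfold edgeIntensity
  fun_prop

@[fun_prop]
theorem measurable_strengthIntensity : Measurable (strengthIntensity (d := d) β α i) := by
  unfold strengthIntensity
  fun_prop

theorem edgeIntensity_comm (z : Fin N → EuclideanSpace ℝ (Fin d)) (i j : Fin N) :
    edgeIntensity β α z i j = edgeIntensity β α z j i := by
  rw [edgeIntensity, edgeIntensity, add_comm, norm_sub_rev]

theorem edgeIntensity_incidentPair (z : Fin N → EuclideanSpace ℝ (Fin d)) (j : {j // j ≠ i}) :
    edgeIntensity β α z (incidentPair i j).1.1 (incidentPair i j).1.2 =
      edgeIntensity β α z i j := by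
  obtain h | h := le_total i j
  · simp [incidentPair, h]
  · simp [incidentPair, h, edgeIntensity_comm z i]

theorem measurable_pi_poissonMeasure_edgeIntensity :
    Measurable fun z : Fin N → EuclideanSpace ℝ (Fin d) =>
      Measure.pi fun p : Pairs N => poissonMeasure (edgeIntensity β α z p.1.1 p.1.2) :=
  measurable_measure_pi fun _ => measurable_poissonMeasure.comp (measurable_edgeIntensity _)

theorem map_sum_incidentPair_jointLaw (hs : 0 < s) :
    (jointLaw d N β α s).map (fun p => ∑ j, p.2 (incidentPair i j)) = strengthLaw d β α s i := by
  rw [jointLaw, withDensity_prod_gaussPdf hs, strengthLaw]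
  refine (measure_map_bind (measurable_map_prodMk measurable_pi_poissonMeasure_edgeIntensity)
    (by fun_prop)).trans ?_
  congr 1
  ext z : 1
  rw [Measure.map_map (by fun_prop) (by fun_prop)]
  refine (map_sum_pi_poissonMeasure _ incidentPair_injective).trans ?_
  simp only [edgeIntensity_incidentPair, strengthIntensity]

theorem isProbabilityMeasure_strengthLaw (hs : 0 < s) :
    IsProbabilityMeasure (strengthLaw d β α s i) := by
  have := isProbabilityMeasure_gaussMeasure (d := d) hs
  exact isProbabilityMeasure_bind
    (measurable_poissonMeasure.comp measurable_strengthIntensity).aemeasurable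
    (ae_of_all _ fun _ => inferInstance)

theorem strengthIntensity_le (hβ : 0 ≤ β) (z : Fin N → EuclideanSpace ℝ (Fin d)) :
    strengthIntensity β α i z ≤ ∑ j : {j // j ≠ i}, (exp (α i + α j)).toNNReal := by
  refine Finset.sum_le_sum fun j _ => Real.toNNReal_mono (exp_le_exp.2 ?_)
  exact sub_le_self _ (by positivity)

theorem memLp_two_natCast_strengthLaw (hs : 0 < s) (hβ : 0 ≤ β) :
    MemLp (fun n : ℕ => (n : ℝ)) 2 (strengthLaw d β α s i) := by
  have := isProbabilityMeasure_gaussMeasure (d := d) hs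
  set C := ∑ j : {j // j ≠ i}, (exp (α i + α j)).toNNReal
  rw [memLp_two_iff_integrable_sq (by fun_prop)]
  refine ⟨by fun_prop, ?_⟩
  rw [hasFiniteIntegral_iff_ofReal (ae_of_all _ fun n => by positivity)]
  simp only [ENNReal.ofReal_pow (Nat.cast_nonneg _), ENNReal.ofReal_natCast]
  rw [strengthLaw, lintegral_natCast_sq_bind_poissonMeasure measurable_strengthIntensity]
  calc _ ≤ ∫⁻ _ : Fin N → EuclideanSpace ℝ (Fin d), (C : ℝ≥0∞) ^ 2
          ∂(Measure.pi fun _ => gaussMeasure d s) +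
        ∫⁻ _ : Fin N → EuclideanSpace ℝ (Fin d), (C : ℝ≥0∞)
          ∂(Measure.pi fun _ => gaussMeasure d s) := by
        gcongr <;> exact strengthIntensity_le hβ _
    _ < ∞ := by simp

section MSLS

variable {Ω : Type} [MeasurableSpace Ω] (M : MSLS Ω)

theorem MSLS.measurable_strength (i : Fin M.N) (t : ℕ) : Measurable (M.strength i t) := by
  have := M.Y_meas
  unfold strength
  fun_prop

theorem MSLS.cond_state_eq_sum (t : ℕ) (l : Fin M.K) :
    M.P[|{ω | M.s t ω = l}] =
      ∑ k, ENNReal.ofReal (M.q l k) • M.P[|{ω | M.s t ω = l} ∩ {ω | M.s (t + 1) ω = k}] := by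
  have hl : MeasurableSet {ω | M.s t ω = l} := M.s_meas t (measurableSet_singleton l)
  have hk (k) : MeasurableSet {ω | M.s (t + 1) ω = k} :=
    M.s_meas (t + 1) (measurableSet_singleton k)
  have : IsProbabilityMeasure (M.P[|{ω | M.s t ω = l}]) :=
    cond_isProbabilityMeasure (M.state_pos t l)
  rw [← sum_meas_smul_cond_fiber (M.s_meas (t + 1)) (M.P[|{ω | M.s t ω = l}])]
  refine Finset.sum_congr rfl fun k _ => ?_
  rw [← M.trans_prob t l k, ENNReal.ofReal_toReal (measure_ne_top _ _),
    ← cond_cond_eq_cond_inter hl (hk k) M.P]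
  rfl

theorem MSLS.map_strength_cond_pair {i : Fin M.N} (t : ℕ) {l k : Fin M.K} (hq : M.q l k ≠ 0) :
    (M.P[|{ω | M.s t ω = l} ∩ {ω | M.s (t + 1) ω = k}]).map (M.strength i (t + 1)) =
      strengthLaw M.d M.β M.α (M.σ2 k) i := by
  have hZ := M.Z_meas
  have hY := M.Y_meas
  rw [← map_sum_incidentPair_jointLaw (M.σ2_pos k), ← M.cond_law_pair t l k hq,
    Measure.map_map (by fun_prop) (by fun_prop)]
  congr 1
  ext ω
  exact M.strength_eq_sum_incidentPair i (t + 1) ω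

theorem MSLS.map_strength_cond_state (i : Fin M.N) (t : ℕ) (l : Fin M.K) :
    (M.P[|{ω | M.s t ω = l}]).map (M.strength i (t + 1)) =
      ∑ k, ENNReal.ofReal (M.q l k) • strengthLaw M.d M.β M.α (M.σ2 k) i := by
  rw [cond_state_eq_sum, Measure.map_finset_sum (M.measurable_strength i _).aemeasurable]
  refine Finset.sum_congr rfl fun k _ => ?_
  by_cases hq : M.q l k = 0
  · simp [hq]
  · rw [Measure.map_smul, M.map_strength_cond_pair t hq]

theorem MSLS.variance_strength (i : Fin M.N) (t : ℕ) (l : Fin M.K) :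
    Var[fun ω => (M.strength i (t + 1) ω : ℝ); M.P[|{ω | M.s t ω = l}]] =
      ∑ k, M.q l k * Var[fun n : ℕ => (n : ℝ); strengthLaw M.d M.β M.α (M.σ2 k) i] +
        ∑ k, M.q l k * ((∫ n, (n : ℝ) ∂strengthLaw M.d M.β M.α (M.σ2 k) i) -
          ∑ j, M.q l j * ∫ n, (n : ℝ) ∂strengthLaw M.d M.β M.α (M.σ2 j) i) ^ 2 := by
  have hprob (k) : IsProbabilityMeasure (strengthLaw M.d M.β M.α (M.σ2 k) i) :=
    isProbabilityMeasure_strengthLaw (M.σ2_pos k)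
  rw [← variance_sum_ofReal_smul_measure (M.q_nonneg l) fun k =>
      memLp_two_natCast_strengthLaw (M.σ2_pos k) M.β_pos.le, ← M.map_strength_cond_state i t l,
    variance_map (by fun_prop) (M.measurable_strength i _).aemeasurable]
  rfl

end MSLS

end Network

section HomogeneousEffects

variable {N d : ℕ} {β s a : ℝ} {α : Fin N → ℝ} {i : Fin N}

theorem coe_strengthIntensity (hα : ∀ j, j ≠ i → α i + α j = a)
    (z : Fin N → EuclideanSpace ℝ (Fin d)) :
    (strengthIntensity β α i z : ℝ≥0∞) =
      ENNReal.ofReal (exp a) *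
        ∑ j : {j // j ≠ i}, ENNReal.ofReal (exp (-β * ‖z i - z j‖ ^ 2)) := by
  rw [strengthIntensity, ENNReal.ofNNReal_finsetSum, Finset.mul_sum]
  refine Finset.sum_congr rfl fun j _ => ?_
  rw [← ENNReal.ofReal_mul (exp_pos a).le, ← exp_add, neg_mul, ← sub_eq_add_neg, ← hα j j.2]
  rfl

theorem lintegral_strengthIntensity (hs : 0 < s) (hβ : 0 ≤ β)
    (hα : ∀ j, j ≠ i → α i + α j = a) :
    ∫⁻ z : Fin N → EuclideanSpace ℝ (Fin d), strengthIntensity β α i z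
        ∂(Measure.pi fun _ => gaussMeasure d s) =
      ENNReal.ofReal (((N : ℝ) - 1) * exp a * (4 * s * β + 1) ^ (-(d : ℝ) / 2)) := by
  have := isProbabilityMeasure_gaussMeasure (d := d) hs
  have hedge := lintegral_lintegral_pow_exp_neg_mul_sq_norm_sub_gaussMeasure (d := d) hs hβ 0
  simp only [zero_add, pow_one, pow_zero, one_mul, Nat.cast_zero] at hedge
  simp only [coe_strengthIntensity hα]
  rw [lintegral_const_mul _ (by fun_prop),
    lintegral_sum_star i (f := fun x w => ENNReal.ofReal (exp (-β * ‖x - w‖ ^ 2))) (by fun_prop),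
    hedge, Fintype.card_fin, ← ENNReal.ofReal_natCast, ← ENNReal.ofReal_mul (by positivity),
    ← ENNReal.ofReal_mul (by positivity), Nat.cast_pred i.pos]
  ring_nf

theorem lintegral_strengthIntensity_sq (hs : 0 < s) (hβ : 0 ≤ β)
    (hα : ∀ j, j ≠ i → α i + α j = a) :
    ∫⁻ z : Fin N → EuclideanSpace ℝ (Fin d), (strengthIntensity β α i z : ℝ≥0∞) ^ 2
        ∂(Measure.pi fun _ => gaussMeasure d s) =
      ENNReal.ofReal (exp (2 * a) * ((N : ℝ) - 1) * (8 * s * β + 1) ^ (-(d : ℝ) / 2) +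
        ((N : ℝ) - 1) * ((N : ℝ) - 2) * exp (2 * a) * (2 * s * β + 1) ^ (-(d : ℝ) / 2) *
          (6 * s * β + 1) ^ (-(d : ℝ) / 2)) := by
  have := isProbabilityMeasure_gaussMeasure (d := d) hs
  have hedge := lintegral_lintegral_pow_exp_neg_mul_sq_norm_sub_gaussMeasure (d := d) hs
    (by positivity : 0 ≤ 2 * β) 0
  have hpath := lintegral_lintegral_pow_exp_neg_mul_sq_norm_sub_gaussMeasure (d := d) hs hβ 1
  simp only [zero_add, pow_one, pow_zero, one_mul, Nat.cast_zero, Nat.cast_one, Nat.reduceAdd]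
    at hedge hpath
  have hsq (x w : EuclideanSpace ℝ (Fin d)) :
      ENNReal.ofReal (exp (-β * ‖x - w‖ ^ 2)) ^ 2 =
        ENNReal.ofReal (exp (-(2 * β) * ‖x - w‖ ^ 2)) := by
    rw [← ENNReal.ofReal_pow (exp_pos _).le, ← exp_nat_mul]
    push_cast
    ring_nf
  simp only [coe_strengthIntensity hα, mul_pow]
  rw [lintegral_const_mul _ (by fun_prop),
    lintegral_sum_sq_star i (f := fun x w => ENNReal.ofReal (exp (-β * ‖x - w‖ ^ 2)))
      (by fun_prop)]
  simp only [hsq, hedge, hpath, Fintype.card_fin]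
  rw [← ENNReal.ofReal_natCast, ← ENNReal.ofReal_natCast, ← ENNReal.ofReal_mul (by positivity),
    ← ENNReal.ofReal_mul (by positivity), ← ENNReal.ofReal_add (by positivity) (by positivity),
    ← ENNReal.ofReal_pow (by positivity), ← ENNReal.ofReal_mul (by positivity),
    Nat.cast_descFactorial_two, Nat.cast_pred i.pos, ← exp_nat_mul,
    mul_rpow (by positivity) (by positivity)]
  push_cast
  ring_nf

theorem lintegral_natCast_strengthLaw (hs : 0 < s) (hβ : 0 ≤ β)
    (hα : ∀ j, j ≠ i → α i + α j = a) :
    ∫⁻ n, n ∂strengthLaw d β α s i =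
      ENNReal.ofReal (((N : ℝ) - 1) * exp a * (4 * s * β + 1) ^ (-(d : ℝ) / 2)) := by
  rw [strengthLaw, lintegral_natCast_bind_poissonMeasure measurable_strengthIntensity,
    lintegral_strengthIntensity hs hβ hα]

theorem integral_natCast_strengthLaw (hs : 0 < s) (hβ : 0 ≤ β)
    (hα : ∀ j, j ≠ i → α i + α j = a) :
    ∫ n, (n : ℝ) ∂strengthLaw d β α s i =
      ((N : ℝ) - 1) * exp a * (4 * s * β + 1) ^ (-(d : ℝ) / 2) := by
  have hN : (0 : ℝ) ≤ N - 1 := sub_nonneg.2 (mod_cast i.pos)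
  rw [integral_eq_lintegral_of_nonneg_ae (ae_of_all _ fun n => Nat.cast_nonneg n) (by fun_prop)]
  simp only [ENNReal.ofReal_natCast, lintegral_natCast_strengthLaw hs hβ hα]
  exact ENNReal.toReal_ofReal (by positivity)

theorem variance_natCast_strengthLaw (hs : 0 < s) (hβ : 0 ≤ β)
    (hα : ∀ j, j ≠ i → α i + α j = a) :
    Var[fun n : ℕ => (n : ℝ); strengthLaw d β α s i] =
      exp (2 * a) * ((N : ℝ) - 1) * (8 * s * β + 1) ^ (-(d : ℝ) / 2) +
        ((N : ℝ) - 1) * ((N : ℝ) - 2) * exp (2 * a) * (2 * s * β + 1) ^ (-(d : ℝ) / 2) *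
          (6 * s * β + 1) ^ (-(d : ℝ) / 2) +
        ((N : ℝ) - 1) * exp a * (4 * s * β + 1) ^ (-(d : ℝ) / 2) -
        ((N : ℝ) - 1) ^ 2 * exp (2 * a) * (4 * s * β + 1) ^ (-(d : ℝ)) := by
  have := isProbabilityMeasure_strengthLaw (d := d) (β := β) (α := α) (i := i) hs
  have hN : (0 : ℝ) ≤ N - 1 := sub_nonneg.2 (mod_cast i.pos)
  have hN₂ : (0 : ℝ) ≤ (N - 1) * (N - 2) := by
    have h := Nat.cast_nonneg (α := ℝ) ((N - 1).descFactorial 2)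
    rw [Nat.cast_descFactorial_two, Nat.cast_pred i.pos] at h
    linarith
  have hmean : 0 ≤ ((N : ℝ) - 1) * exp a * (4 * s * β + 1) ^ (-(d : ℝ) / 2) := by positivity
  have hpow : ((4 * s * β + 1) ^ (-(d : ℝ) / 2)) ^ 2 = (4 * s * β + 1) ^ (-(d : ℝ)) := by
    rw [← rpow_mul_natCast (by positivity)]
    push_cast
    ring_nf
  rw [variance_eq_toReal_lintegral_sub_sq (memLp_two_natCast_strengthLaw hs hβ)
    fun n => Nat.cast_nonneg n]
  simp only [ENNReal.ofReal_natCast]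
  rw [lintegral_natCast_strengthLaw hs hβ hα, strengthLaw,
    lintegral_natCast_sq_bind_poissonMeasure measurable_strengthIntensity,
    lintegral_strengthIntensity_sq hs hβ hα, lintegral_strengthIntensity hs hβ hα,
    ← ENNReal.ofReal_add (by positivity) hmean, ENNReal.toReal_ofReal (by positivity),
    ENNReal.toReal_ofReal hmean, mul_pow, mul_pow, hpow, ← exp_nat_mul, Nat.cast_ofNat]

end HomogeneousEffects

theorem statement15_general {Ω : Type} [MeasurableSpace Ω] (M : MSLS Ω) (a : ℝ) (i : Fin M.N)
    (hα : ∀ j, j ≠ i → M.α i + M.α j = a) (t : ℕ) (l : Fin M.K)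
    (μ : Fin M.K → ℝ)
    (hμ : ∀ k, μ k =
      ((M.N : ℝ) - 1) * Real.exp a * (4 * M.σ2 k * M.β + 1) ^ (-(M.d : ℝ) / 2))
    (μstar : ℝ) (hμstar : μstar = ∑ k, M.q l k * μ k)
    (V : Fin M.K → ℝ)
    (hV : ∀ k, V k =
      Real.exp (2 * a) * ((M.N : ℝ) - 1) * (8 * M.σ2 k * M.β + 1) ^ (-(M.d : ℝ) / 2) +
        ((M.N : ℝ) - 1) * ((M.N : ℝ) - 2) * Real.exp (2 * a) *
          (2 * M.σ2 k * M.β + 1) ^ (-(M.d : ℝ) / 2) *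
          (6 * M.σ2 k * M.β + 1) ^ (-(M.d : ℝ) / 2) +
        ((M.N : ℝ) - 1) * Real.exp a * (4 * M.σ2 k * M.β + 1) ^ (-(M.d : ℝ) / 2) -
        ((M.N : ℝ) - 1) ^ 2 * Real.exp (2 * a) * (4 * M.σ2 k * M.β + 1) ^ (-(M.d : ℝ))) :
    variance (fun ω => (M.strength i (t + 1) ω : ℝ)) (M.P[|{ω | M.s t ω = l}]) =
      ∑ k, M.q l k * V k + ∑ k, M.q l k * (μ k - μstar) ^ 2 := by
  have hmean (k) : ∫ n, (n : ℝ) ∂strengthLaw M.d M.β M.α (M.σ2 k) i = μ k := by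
    rw [hμ, integral_natCast_strengthLaw (M.σ2_pos k) M.β_pos.le hα]
  have hvar (k) : Var[fun n : ℕ => (n : ℝ); strengthLaw M.d M.β M.α (M.σ2 k) i] = V k := by
    rw [hV, variance_natCast_strengthLaw (M.σ2_pos k) M.β_pos.le hα]
  simp only [M.variance_strength i t l, hmean, hvar, hμstar]

/-- Under the MS-LS model with `α_i + α_j = α` for all pairs, the fully
explicit conditional variance of the nodal strength given the previous state `l` is
`Var(Y_t | s_{t-1} = l) = Σ_k q_{lk} V_k + Σ_k q_{lk} (μ_k - μ_l*)²` with
`μ_k = (N-1) e^α (4σ_k²β+1)^{-d/2}`, `μ_l* = Σ_k q_{lk} μ_k`, and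
`V_k = e^{2α}(N-1)(8σ_k²β+1)^{-d/2} + (N-1)(N-2)e^{2α}(2σ_k²β+1)^{-d/2}(6σ_k²β+1)^{-d/2}
  + (N-1)e^α(4σ_k²β+1)^{-d/2} - (N-1)²e^{2α}(4σ_k²β+1)^{-d}`. -/
theorem statement15 {Ω : Type} [MeasurableSpace Ω] (M : MSLS Ω) (a : ℝ)
    (hα : ∀ i j, M.α i + M.α j = a) (i : Fin M.N) (t : ℕ) (l : Fin M.K)
    (μ : Fin M.K → ℝ)
    (hμ : ∀ k, μ k =
      ((M.N : ℝ) - 1) * Real.exp a * (4 * M.σ2 k * M.β + 1) ^ (-(M.d : ℝ) / 2))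
    (μstar : ℝ) (hμstar : μstar = ∑ k, M.q l k * μ k)
    (V : Fin M.K → ℝ)
    (hV : ∀ k, V k =
      Real.exp (2 * a) * ((M.N : ℝ) - 1) * (8 * M.σ2 k * M.β + 1) ^ (-(M.d : ℝ) / 2) +
        ((M.N : ℝ) - 1) * ((M.N : ℝ) - 2) * Real.exp (2 * a) *
          (2 * M.σ2 k * M.β + 1) ^ (-(M.d : ℝ) / 2) *
          (6 * M.σ2 k * M.β + 1) ^ (-(M.d : ℝ) / 2) +
        ((M.N : ℝ) - 1) * Real.exp a * (4 * M.σ2 k * M.β + 1) ^ (-(M.d : ℝ) / 2) -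
        ((M.N : ℝ) - 1) ^ 2 * Real.exp (2 * a) * (4 * M.σ2 k * M.β + 1) ^ (-(M.d : ℝ))) :
    variance (fun ω => (M.strength i (t + 1) ω : ℝ)) (M.P[|{ω | M.s t ω = l}]) =
      ∑ k, M.q l k * V k + ∑ k, M.q l k * (μ k - μstar) ^ 2 :=
  statement15_general M a i (fun j _ => hα i j) t l μ hμ μstar hμstar V hV
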